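/- For every p > 1, the Wasserstein space 𝒲_p(ℝ²) over ℝ² with the maximum metric is diagonally rigid: for every isometry Φ : 𝒲_p(ℝ²) → 𝒲_p(ℝ²) there exists an isometry T of (ℝ², d_m) such that (Φ ∘ T_#)(μ) = μ for every μ ∈ 𝒲_p(ℝ²) whose support is contained in L₊ or in L₋. -/

import Mathlib

open MeasureTheory

/-- The `p`-Wasserstein distance between two measures, defined as the infimum over all
couplings `π` of `μ` and `ν` of `(∬ d(x,y)^p dπ)^(1/p)`. -/
noncomputable def Wdist {X : Type*} [MeasurableSpace X] [PseudoMetricSpace X] (p : ℝ)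
    (μ ν : Measure X) : ℝ :=
  (⨅ π ∈ {π : Measure (X × X) | π.map Prod.fst = μ ∧ π.map Prod.snd = ν},
    (∫⁻ q, edist q.1 q.2 ^ p ∂π) ^ (1 / p)).toReal

/-- The `p`-Wasserstein space over `X`: Borel probability measures on `X` with finite
`p`-th moment. -/
def WSet (X : Type*) [MeasurableSpace X] [PseudoMetricSpace X] (p : ℝ) : Set (Measure X) :=
  {μ | IsProbabilityMeasure μ ∧ ∃ x₀ : X, ∫⁻ x, edist x x₀ ^ p ∂μ < ⊤}

/-- An isometry of the underlying metric space: a distance-preserving bijection. -/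
def IsIsom {X : Type*} [PseudoMetricSpace X] (T : X → X) : Prop :=
  Function.Bijective T ∧ ∀ x y, dist (T x) (T y) = dist x y

/-- An isometry of the `p`-Wasserstein space over `X`: a bijection of the space of
probability measures with finite `p`-th moment preserving the Wasserstein distance. -/
def IsWIsometry (X : Type*) [MeasurableSpace X] [PseudoMetricSpace X] (p : ℝ)
    (Φ : Measure X → Measure X) : Prop :=
  Set.BijOn Φ (WSet X p) (WSet X p) ∧
    ∀ μ ∈ WSet X p, ∀ ν ∈ WSet X p, Wdist p (Φ μ) (Φ ν) = Wdist p μ ν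

/-- The (topological) support of a measure. -/
def msupport {X : Type*} [TopologicalSpace X] [MeasurableSpace X] (μ : Measure X) : Set X :=
  {x | ∀ U : Set X, IsOpen U → x ∈ U → μ U ≠ 0}

def diagLine (ε a : ℝ) : Set (ℝ × ℝ) := {z | z.2 = ε * z.1 + a}

def Lplus : Set (ℝ × ℝ) := {z | z.2 = z.1}

def Lminus : Set (ℝ × ℝ) := {z | z.2 = -z.1}

/-- The closed square `Q = [-1,1]²`. -/
abbrev Qs : Set (ℝ × ℝ) := Set.Icc (-1, -1) (1, 1)

def LplusQ : Set ↥Qs := {q | (q : ℝ × ℝ).2 = (q : ℝ × ℝ).1}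

def LminusQ : Set ↥Qs := {q | (q : ℝ × ℝ).2 = -(q : ℝ × ℝ).1}

/-!
`𝒲_p`-isometries preserve Dirac measures: in a normed space `δ_x` is the midpoint-doubling centre
of every `ν`, by dilating `ν` about `x`. Conversely, if `μ` admits such a doubling through `δ_x`
with `x` in its support, the product coupling makes Minkowski's inequality an equality, so
`d(·, x)` is `μ`-a.e. constant, hence zero. Thus `Φ` acts on Dirac measures by an isometry `T⁻¹`,
and `Φ (T_# μ)` has the same potential `x ↦ d_{W_p}(·, δ_x) ^ p` as `μ`.

The first-order expansion of the potential at infinity recovers the integrals of horofunctions.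
For the maximum metric, in the diagonal direction `(1, e)` with `|e| = 1`, these are
`∫ max (c - y.1) (-(e * y.2))`, whose right derivative in `c` is the distribution function of
`y.1 - e * y.2`. So the potential determines both diagonal marginals, which in turn determine a
measure concentrated on a diagonal line.
-/

namespace Wasserstein

open Filter Topology Set

section Rpow

variable {Ω : Type*} [MeasurableSpace Ω] {π : Measure Ω} {p : ℝ}

theorem integrable_rpow_of_nonneg {f : Ω → ℝ} (hp : 0 < p) (hf : MemLp f (.ofReal p) π)
    (hf₀ : ∀ ω, 0 ≤ f ω) : Integrable (fun ω => f ω ^ p) π := by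
  simpa [abs_of_nonneg (hf₀ _), ENNReal.toReal_ofReal hp.le] using
    hf.integrable_norm_rpow (by simpa using hp) ENNReal.ofReal_ne_top

theorem add_rpow_le_two_rpow_mul_add_rpow (hp : 1 ≤ p) {a b : ℝ} (ha : 0 ≤ a) (hb : 0 ≤ b) :
    (a + b) ^ p ≤ 2 ^ (p - 1) * (a ^ p + b ^ p) := by
  lift a to NNReal using ha
  lift b to NNReal using hb
  exact_mod_cast NNReal.rpow_add_le_mul_rpow_add_rpow a b hp

theorem add_rpow_lt_two_rpow_mul_add_rpow (hp : 1 < p) {a b : ℝ} (ha : 0 ≤ a) (hb : 0 ≤ b)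
    (hab : a ≠ b) : (a + b) ^ p < 2 ^ (p - 1) * (a ^ p + b ^ p) := by
  have hconv : (1 / 2 * a + 1 / 2 * b) ^ p < 1 / 2 * a ^ p + 1 / 2 * b ^ p :=
    (strictConvexOn_rpow hp).2 ha hb hab one_half_pos one_half_pos (add_halves 1)
  calc (a + b) ^ p = 2 ^ p * (1 / 2 * a + 1 / 2 * b) ^ p := by
        rw [← Real.mul_rpow zero_le_two (by positivity)]; ring_nf
    _ < 2 ^ p * (1 / 2 * a ^ p + 1 / 2 * b ^ p) := by gcongr
    _ = 2 ^ (p - 1) * (a ^ p + b ^ p) := by rw [Real.rpow_sub_one two_ne_zero]; ring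

theorem abs_rpow_sub_rpow_le (hp : 1 ≤ p) {a b M : ℝ} (ha : a ∈ Icc 0 M) (hb : b ∈ Icc 0 M) :
    |a ^ p - b ^ p| ≤ p * M ^ (p - 1) * |a - b| := by
  refine Convex.norm_image_sub_le_of_norm_hasDerivWithin_le (𝕜 := ℝ) (s := Icc 0 M)
    (f := fun t => t ^ p) (f' := fun t => p * t ^ (p - 1))
    (fun t _ => (Real.hasDerivAt_rpow_const (Or.inr hp)).hasDerivWithinAt) (fun t ht => ?_)
    (convex_Icc 0 M) hb ha
  rw [Real.norm_of_nonneg (by have := ht.1; positivity)]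
  gcongr
  exacts [ht.1, ht.2]

theorem abs_mul_div_rpow_sub_one_le (hp : 1 ≤ p) {d r u : ℝ} (hd : 0 ≤ d) (hr : 1 ≤ r)
    (hu : |d - r| ≤ u) : |r * ((d / r) ^ p - 1)| ≤ p * (1 + u) ^ p := by
  have hr₀ : 0 < r := one_pos.trans_le hr
  have hu₀ : 0 ≤ u := (abs_nonneg _).trans hu
  have hmem : d / r ∈ Icc 0 (1 + u) := by
    refine ⟨by positivity, ?_⟩
    rw [div_le_iff₀ hr₀]
    nlinarith [(abs_le.1 hu).2]
  have hone : (1 : ℝ) ∈ Icc 0 (1 + u) := ⟨zero_le_one, le_add_of_nonneg_right hu₀⟩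
  have hsub : |d / r - 1| * r = |d - r| := by
    rw [div_sub_one hr₀.ne', abs_div, abs_of_pos hr₀, div_mul_cancel₀ _ hr₀.ne']
  calc |r * ((d / r) ^ p - 1)|
      = |(d / r) ^ p - 1 ^ p| * r := by rw [abs_mul, abs_of_pos hr₀, mul_comm, Real.one_rpow]
    _ ≤ p * (1 + u) ^ (p - 1) * |d / r - 1| * r := by
        gcongr
        exact abs_rpow_sub_rpow_le hp hmem hone
    _ = p * (1 + u) ^ (p - 1) * |d - r| := by rw [mul_assoc, hsub]
    _ ≤ p * (1 + u) ^ (p - 1) * (1 + u) := by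
        gcongr
        linarith
    _ = p * (1 + u) ^ p := by rw [mul_assoc, ← Real.rpow_add_one (by positivity), sub_add_cancel]

/-- The equality case of `‖f + g‖ₚ ≤ ‖f‖ₚ + ‖g‖ₚ` when `‖g‖ₚ ≤ ‖f‖ₚ`. -/
theorem ae_eq_of_two_rpow_mul_integral_le (hp : 1 < p) {f g : Ω → ℝ}
    (hf : MemLp f (.ofReal p) π) (hg : MemLp g (.ofReal p) π)
    (hf₀ : ∀ ω, 0 ≤ f ω) (hg₀ : ∀ ω, 0 ≤ g ω)
    (hgf : ∫ ω, g ω ^ p ∂π ≤ ∫ ω, f ω ^ p ∂π)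
    (hfg : 2 ^ p * ∫ ω, f ω ^ p ∂π ≤ ∫ ω, (f ω + g ω) ^ p ∂π) : f =ᵐ[π] g := by
  have hp₀ : 0 < p := one_pos.trans hp
  have hfi := integrable_rpow_of_nonneg hp₀ hf hf₀
  have hgi := integrable_rpow_of_nonneg hp₀ hg hg₀
  have hsum : Integrable (fun ω => (f ω + g ω) ^ p) π :=
    integrable_rpow_of_nonneg hp₀ (hf.add hg) fun ω => add_nonneg (hf₀ ω) (hg₀ ω)
  have hdom : Integrable (fun ω => 2 ^ (p - 1) * (f ω ^ p + g ω ^ p)) π :=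
    (hfi.add hgi).const_mul _
  have hgap : ∀ ω, 0 ≤ 2 ^ (p - 1) * (f ω ^ p + g ω ^ p) - (f ω + g ω) ^ p := fun ω =>
    sub_nonneg.2 (add_rpow_le_two_rpow_mul_add_rpow hp.le (hf₀ ω) (hg₀ ω))
  have hgap_int : ∫ ω, (2 ^ (p - 1) * (f ω ^ p + g ω ^ p) - (f ω + g ω) ^ p) ∂π = 0 := by
    refine le_antisymm ?_ (integral_nonneg hgap)
    rw [integral_sub hdom hsum, integral_const_mul, integral_add hfi hgi, sub_nonpos]
    calc 2 ^ (p - 1) * (∫ ω, f ω ^ p ∂π + ∫ ω, g ω ^ p ∂π)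
        ≤ 2 ^ (p - 1) * (∫ ω, f ω ^ p ∂π + ∫ ω, f ω ^ p ∂π) := by gcongr
      _ = 2 ^ p * ∫ ω, f ω ^ p ∂π := by rw [Real.rpow_sub_one two_ne_zero]; ring
      _ ≤ ∫ ω, (f ω + g ω) ^ p ∂π := hfg
  filter_upwards [(integral_eq_zero_iff_of_nonneg hgap (hdom.sub hsum)).1 hgap_int] with ω hω
  by_contra hne
  exact (add_rpow_lt_two_rpow_mul_add_rpow hp (hf₀ ω) (hg₀ ω) hne).ne' (sub_eq_zero.1 hω)

end Rpow

section Moments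

variable {X Y : Type*} [PseudoMetricSpace X] [MeasurableSpace X] [PseudoMetricSpace Y]
  [MeasurableSpace Y] {p : ℝ} {μ : Measure X}

/-- The potential of `μ`: the function `x ↦ d_{W_p}(μ, δ_x) ^ p`, see `Wdist_dirac_right`. -/
noncomputable def potential (p : ℝ) (μ : Measure X) (x : X) : ℝ :=
  ∫ y, dist y x ^ p ∂μ

theorem potential_nonneg (p : ℝ) (μ : Measure X) (x : X) : 0 ≤ potential p μ x :=
  integral_nonneg fun _ => Real.rpow_nonneg dist_nonneg p

variable [OpensMeasurableSpace X]

theorem toReal_lintegral_edist_rpow (hp : 0 ≤ p) (μ : Measure X) (x : X) :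
    (∫⁻ y, edist y x ^ p ∂μ).toReal = potential p μ x := by
  have hm : Measurable fun y : X => dist y x ^ p := by fun_prop
  rw [potential, integral_eq_lintegral_of_nonneg_ae
    (.of_forall fun y => Real.rpow_nonneg dist_nonneg p) hm.aestronglyMeasurable]
  simp_rw [edist_dist, ENNReal.ofReal_rpow_of_nonneg dist_nonneg hp]

theorem dirac_mem_WSet (hp : 0 < p) (x : X) : Measure.dirac x ∈ WSet X p := by
  refine ⟨inferInstance, x, ?_⟩
  rw [lintegral_dirac' x (by fun_prop)]
  simp [hp]

theorem memLp_dist (hp : 0 < p) (hμ : μ ∈ WSet X p) (x : X) :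
    MemLp (fun y => dist y x) (.ofReal p) μ := by
  obtain ⟨_, x₀, hx₀⟩ := hμ
  have hm : ∀ z : X, AEStronglyMeasurable (fun y => dist y z) μ := fun z =>
    (continuous_id.dist continuous_const).aestronglyMeasurable
  have hLp : MemLp (fun y => dist y x₀) (.ofReal p) μ := by
    refine ⟨hm x₀, ?_⟩
    rw [eLpNorm_lt_top_iff_lintegral_rpow_enorm_lt_top (by simpa using hp) ENNReal.ofReal_ne_top,
      ENNReal.toReal_ofReal hp.le]
    simpa only [Real.enorm_of_nonneg dist_nonneg, ← edist_dist] using hx₀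
  refine (hLp.add (memLp_const (dist x₀ x))).mono' (hm x) (.of_forall fun y => ?_)
  rw [Real.norm_of_nonneg dist_nonneg]
  exact dist_triangle y x₀ x

theorem integrable_of_mem_WSet {E : Type*} [NormedAddCommGroup E] [SecondCountableTopology E]
    [MeasurableSpace E] [OpensMeasurableSpace E] {μ : Measure E} (hp : 1 ≤ p)
    (hμ : μ ∈ WSet E p) : Integrable (fun y => y) μ := by
  have := hμ.1
  have hnorm := memLp_dist (one_pos.trans_le hp) hμ 0
  simp_rw [dist_zero_right] at hnorm
  exact (integrable_norm_iff aestronglyMeasurable_id).1 (hnorm.integrable (by simpa using hp))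

theorem map_mem_WSet [BorelSpace Y] (hp : 0 ≤ p) {K : NNReal} {f : X → Y}
    (hf : LipschitzWith K f) (hμ : μ ∈ WSet X p) : μ.map f ∈ WSet Y p := by
  obtain ⟨_, x₀, hx₀⟩ := hμ
  refine ⟨Measure.isProbabilityMeasure_map hf.continuous.measurable.aemeasurable, f x₀, ?_⟩
  calc ∫⁻ z, edist z (f x₀) ^ p ∂μ.map f
      ≤ ∫⁻ y, edist (f y) (f x₀) ^ p ∂μ := lintegral_map_le _ _
    _ ≤ ∫⁻ y, K ^ p * edist y x₀ ^ p ∂μ := by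
        refine lintegral_mono fun y => ?_
        rw [← ENNReal.mul_rpow_of_nonneg _ _ hp]
        exact ENNReal.rpow_le_rpow (hf y x₀) hp
    _ = K ^ p * ∫⁻ y, edist y x₀ ^ p ∂μ := lintegral_const_mul _ (by fun_prop)
    _ < ⊤ := ENNReal.mul_lt_top (ENNReal.rpow_lt_top_of_nonneg hp ENNReal.coe_ne_top) hx₀

theorem mul_potential_div_rpow_sub_one (hp : 0 < p) (hμ : μ ∈ WSet X p) {r : ℝ} (hr : 0 ≤ r)
    (x : X) : r * (potential p μ x / r ^ p - 1) = ∫ y, r * ((dist y x / r) ^ p - 1) ∂μ := by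
  have := hμ.1
  have hint : Integrable (fun y => dist y x ^ p) μ :=
    integrable_rpow_of_nonneg hp (memLp_dist hp hμ x) fun _ => dist_nonneg
  simp_rw [Real.div_rpow dist_nonneg hr]
  rw [integral_const_mul, integral_sub (hint.div_const _) (integrable_const _), integral_div,
    ← potential, integral_const, probReal_univ, one_smul]

end Moments

section Wdist

variable {X : Type*} [PseudoMetricSpace X] [MeasurableSpace X] {p : ℝ}

theorem Wdist_nonneg (p : ℝ) (μ ν : Measure X) : 0 ≤ Wdist p μ ν :=
  ENNReal.toReal_nonneg

theorem Wdist_comm (p : ℝ) (μ ν : Measure X) : Wdist p μ ν = Wdist p ν μ := by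
  have key (μ ν : Measure X) :
      (⨅ π ∈ {π : Measure (X × X) | π.map Prod.fst = μ ∧ π.map Prod.snd = ν},
        (∫⁻ q, edist q.1 q.2 ^ p ∂π) ^ (1 / p)) ≤
      ⨅ π ∈ {π : Measure (X × X) | π.map Prod.fst = ν ∧ π.map Prod.snd = μ},
        (∫⁻ q, edist q.1 q.2 ^ p ∂π) ^ (1 / p) := by
    refine le_iInf₂ fun π hπ =>
      iInf₂_le_of_le (π.map MeasurableEquiv.prodComm) ⟨?_, ?_⟩ ?_
    · rw [Measure.map_map measurable_fst (MeasurableEquiv.measurable _)]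
      exact hπ.2
    · rw [Measure.map_map measurable_snd (MeasurableEquiv.measurable _)]
      exact hπ.1
    · rw [lintegral_map_equiv]
      exact (congrArg (· ^ (1 / p)) (lintegral_congr fun q => by rw [edist_comm]; rfl)).le
  exact congrArg ENNReal.toReal (le_antisymm (key μ ν) (key ν μ))

theorem Wdist_map_map_rpow_le {Ω : Type*} [MeasurableSpace Ω] {P : Measure Ω} (hp : 0 < p)
    {f g : Ω → X} (hf : Measurable f) (hg : Measurable g) {r : Ω → ℝ}
    (hr : Integrable (fun ω => r ω ^ p) P) (hfg : ∀ ω, dist (f ω) (g ω) ≤ r ω) :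
    Wdist p (P.map f) (P.map g) ^ p ≤ ∫ ω, r ω ^ p ∂P := by
  have hr₀ : ∀ ω, 0 ≤ r ω ^ p := fun ω => Real.rpow_nonneg (dist_nonneg.trans (hfg ω)) p
  have hcost : ∫⁻ q, edist q.1 q.2 ^ p ∂P.map (fun ω => (f ω, g ω)) ≤
      ENNReal.ofReal (∫ ω, r ω ^ p ∂P) := by
    rw [ofReal_integral_eq_lintegral_ofReal hr (.of_forall hr₀)]
    refine (lintegral_map_le _ _).trans (lintegral_mono fun ω => ?_)
    rw [edist_dist, ENNReal.ofReal_rpow_of_nonneg dist_nonneg hp.le]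
    exact ENNReal.ofReal_le_ofReal (Real.rpow_le_rpow dist_nonneg (hfg ω) hp.le)
  have hint₀ : 0 ≤ ∫ ω, r ω ^ p ∂P := integral_nonneg hr₀
  rw [← Real.le_rpow_inv_iff_of_pos (Wdist_nonneg _ _ _) hint₀ hp, ← one_div]
  refine ENNReal.toReal_le_of_le_ofReal (by positivity) ?_
  refine iInf₂_le_of_le (P.map fun ω => (f ω, g ω)) ⟨?_, ?_⟩ ?_
  · rw [Measure.map_map measurable_fst (hf.prodMk hg)]; rfl
  · rw [Measure.map_map measurable_snd (hf.prodMk hg)]; rfl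
  · rw [← ENNReal.ofReal_rpow_of_nonneg hint₀ (by positivity)]
    exact ENNReal.rpow_le_rpow hcost (by positivity)

end Wdist

section Dirac

variable {X : Type*} [MetricSpace X] [MeasurableSpace X] [OpensMeasurableSpace X] {p : ℝ}

theorem Wdist_dirac_right (hp : 0 ≤ p) (μ : Measure X) [IsProbabilityMeasure μ] (x : X) :
    Wdist p μ (Measure.dirac x) = potential p μ x ^ (1 / p) := by
  have hcost : ∀ π ∈ {π : Measure (X × X) | π.map Prod.fst = μ ∧ π.map Prod.snd = .dirac x},
      ∫⁻ q, edist q.1 q.2 ^ p ∂π = ∫⁻ y, edist y x ^ p ∂μ := by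
    rintro π ⟨hfst, hsnd⟩
    have hx : ∀ᵐ q ∂π, q.2 = x := by
      refine ae_of_ae_map (p := (· = x)) measurable_snd.aemeasurable ?_
      rw [hsnd]
      exact (ae_dirac_iff (measurableSet_singleton x)).2 rfl
    rw [← hfst, lintegral_map (by fun_prop) measurable_fst]
    refine lintegral_congr_ae ?_
    filter_upwards [hx] with q hq
    rw [hq]
  have hprod : μ.prod (.dirac x) ∈
      {π : Measure (X × X) | π.map Prod.fst = μ ∧ π.map Prod.snd = .dirac x} := by
    simp [Measure.map_fst_prod, Measure.map_snd_prod]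
  rw [Wdist, biInf_congr fun π hπ => by rw [hcost π hπ], biInf_const ⟨_, hprod⟩,
    ← ENNReal.toReal_rpow, toReal_lintegral_edist_rpow hp]

theorem Wdist_dirac_right_rpow (hp : 0 < p) (μ : Measure X) [IsProbabilityMeasure μ] (x : X) :
    Wdist p μ (Measure.dirac x) ^ p = potential p μ x := by
  rw [Wdist_dirac_right hp.le, one_div, Real.rpow_inv_rpow (potential_nonneg p μ x) hp.ne']

theorem Wdist_dirac_dirac (hp : 0 < p) (x y : X) :
    Wdist p (Measure.dirac x) (Measure.dirac y) = dist x y := by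
  rw [Wdist_dirac_right hp.le, potential, integral_dirac, one_div,
    Real.rpow_rpow_inv dist_nonneg hp.ne']

end Dirac

section DoublingCenter

variable {X : Type*} [MeasurableSpace X] {p : ℝ}

/-- A measure `μ` such that every `ν` is a metric midpoint of `μ` and some `ξ` in `𝒲_p(X)`.
This purely metric notion singles out the Dirac measures when `X` is a normed space. -/
def IsDoublingCenter [PseudoMetricSpace X] (p : ℝ) (μ : Measure X) : Prop :=
  ∀ ν ∈ WSet X p, ∃ ξ ∈ WSet X p,
    Wdist p μ ξ = 2 * Wdist p μ ν ∧ Wdist p ν ξ ≤ Wdist p μ ν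

theorem isDoublingCenter_map_iff [PseudoMetricSpace X] {Φ : Measure X → Measure X}
    (hΦ : IsWIsometry X p Φ) {μ : Measure X} (hμ : μ ∈ WSet X p) :
    IsDoublingCenter p (Φ μ) ↔ IsDoublingCenter p μ := by
  obtain ⟨hbij, hdist⟩ := hΦ
  constructor
  · intro h ν hν
    obtain ⟨_, hξ', hdouble, hle⟩ := h (Φ ν) (hbij.mapsTo hν)
    obtain ⟨ξ, hξ, rfl⟩ := hbij.surjOn hξ'
    rw [hdist μ hμ ξ hξ, hdist μ hμ ν hν] at hdouble
    rw [hdist ν hν ξ hξ, hdist μ hμ ν hν] at hle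
    exact ⟨ξ, hξ, hdouble, hle⟩
  · intro h _ hν'
    obtain ⟨ν, hν, rfl⟩ := hbij.surjOn hν'
    obtain ⟨ξ, hξ, hdouble, hle⟩ := h ν hν
    refine ⟨Φ ξ, hbij.mapsTo hξ, ?_, ?_⟩
    · rwa [hdist μ hμ ξ hξ, hdist μ hμ ν hν]
    · rwa [hdist ν hν ξ hξ, hdist μ hμ ν hν]

theorem isDoublingCenter_dirac {E : Type*} [NormedAddCommGroup E] [NormedSpace ℝ E]
    [MeasurableSpace E] [BorelSpace E] (hp : 0 < p) (x : E) :
    IsDoublingCenter p (Measure.dirac x) := by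
  intro ν hν
  have := hν.1
  let h : E → E := ⇑(AffineMap.homothety x (2 : ℝ))
  have hcont : Continuous h := AffineMap.homothety_continuous x 2
  have hlip : LipschitzWith 2 h := LipschitzWith.of_dist_le_mul fun y z => by
    simp [h, AffineMap.homothety_apply, dist_smul₀]
  have hξ : ν.map h ∈ WSet E p := map_mem_WSet hp.le hlip hν
  have := hξ.1
  refine ⟨ν.map h, hξ, ?_, ?_⟩
  · have hpot : potential p (ν.map h) x = 2 ^ p * potential p ν x := by
      rw [potential, integral_map hcont.aemeasurable
        (by fun_prop (disch := exact hp.le)), potential, ← integral_const_mul]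
      simp [h, Real.mul_rpow, dist_comm]
    rw [Wdist_comm, Wdist_dirac_right hp.le, Wdist_comm p _ ν, Wdist_dirac_right hp.le, hpot,
      Real.mul_rpow (by positivity) (potential_nonneg p ν x), one_div,
      Real.rpow_rpow_inv zero_le_two hp.ne']
  · have hint : Integrable (fun y => dist y x ^ p) ν :=
      integrable_rpow_of_nonneg hp (memLp_dist hp hν x) fun _ => dist_nonneg
    have hmove : ∀ y, dist y (h y) ≤ dist y x := fun y => by
      norm_num [h, dist_self_homothety, dist_comm]
    have hcost := Wdist_map_map_rpow_le hp measurable_id hcont.measurable hint hmove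
    rwa [Measure.map_id, ← potential, ← Wdist_dirac_right_rpow hp, Wdist_comm p _ (.dirac x),
      Real.rpow_le_rpow_iff (Wdist_nonneg _ _ _) (Wdist_nonneg _ _ _) hp] at hcost

theorem exists_ae_eq_const_of_ae_prod {X Y Z : Type*} [MeasurableSpace X] [MeasurableSpace Y]
    {μ : Measure X} {ν : Measure Y} [SFinite μ] [SFinite ν] [NeZero ν] {f : X → Z} {g : Y → Z}
    (h : ∀ᵐ q ∂μ.prod ν, f q.1 = g q.2) : ∃ c, ∀ᵐ x ∂μ, f x = c := by
  have hswap : ∀ᵐ q ∂ν.prod μ, f q.2 = g q.1 :=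
    Measure.measurePreserving_swap.quasiMeasurePreserving.ae h
  obtain ⟨y, hy⟩ := (Measure.ae_ae_of_ae_prod hswap).exists
  exact ⟨g y, hy⟩

theorem eq_dirac_of_ae_dist_eq [MetricSpace X] [OpensMeasurableSpace X] {μ : Measure X}
    [IsProbabilityMeasure μ] {x : X} (hx : x ∈ μ.support) {c : ℝ}
    (hc : ∀ᵐ y ∂μ, dist y x = c) : μ = Measure.dirac x := by
  have hc₀ : c = 0 := by
    by_contra hne
    have hball : ∃ᵐ y ∂μ, y ∈ Metric.ball x |c| := by
      rw [frequently_ae_mem_iff]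
      exact ((Measure.mem_support_iff_forall x).1 hx _ (Metric.ball_mem_nhds x (by simpa))).ne'
    obtain ⟨y, hy, rfl⟩ := (hball.and_eventually hc).exists
    simp at hy
  have hid : id =ᵐ[μ] fun _ => x := by
    filter_upwards [hc] with y hy
    exact dist_eq_zero.1 (hy.trans hc₀)
  simpa using Measure.map_congr hid

theorem exists_eq_dirac_of_isDoublingCenter [MetricSpace X] [SecondCountableTopology X]
    [OpensMeasurableSpace X] (hp : 1 < p) {μ : Measure X} (hμ : μ ∈ WSet X p)
    (h : IsDoublingCenter p μ) : ∃ x, μ = Measure.dirac x := by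
  have hp₀ : 0 < p := one_pos.trans hp
  have := hμ.1
  obtain ⟨x, hx⟩ := Measure.nonempty_support (NeZero.ne μ)
  obtain ⟨ξ, hξ, hdouble, hle⟩ := h (.dirac x) (dirac_mem_WSet hp₀ x)
  have := hξ.1
  have hμx := (memLp_dist hp₀ hμ x).comp_fst ξ
  have hξx := (memLp_dist hp₀ hξ x).comp_snd μ
  have hpot : potential p ξ x ≤ potential p μ x := by
    rw [← Wdist_dirac_right_rpow hp₀, ← Wdist_dirac_right_rpow hp₀]
    exact Real.rpow_le_rpow (Wdist_nonneg _ _ _) (by rwa [Wdist_comm]) hp₀.le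
  have hfst : ∫ q, dist q.1 x ^ p ∂μ.prod ξ = potential p μ x := by
    simpa [potential] using integral_fun_fst (μ := μ) (ν := ξ) fun y => dist y x ^ p
  have hsnd : ∫ q, dist q.2 x ^ p ∂μ.prod ξ = potential p ξ x := by
    simpa [potential] using integral_fun_snd (μ := μ) (ν := ξ) fun y => dist y x ^ p
  have hsum : 2 ^ p * potential p μ x ≤ ∫ q, (dist q.1 x + dist q.2 x) ^ p ∂μ.prod ξ := by
    have hint : Integrable (fun q => (dist q.1 x + dist q.2 x) ^ p) (μ.prod ξ) :=
      integrable_rpow_of_nonneg hp₀ (hμx.add hξx) fun q => add_nonneg dist_nonneg dist_nonneg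
    have hcost := Wdist_map_map_rpow_le hp₀ measurable_fst measurable_snd hint
      fun q => dist_triangle_right q.1 q.2 x
    rwa [← Measure.fst, ← Measure.snd, Measure.fst_prod, Measure.snd_prod, hdouble,
      Real.mul_rpow zero_le_two (Wdist_nonneg _ _ _), Wdist_dirac_right_rpow hp₀] at hcost
  have heq : (fun q : X × X => dist q.1 x) =ᵐ[μ.prod ξ] fun q => dist q.2 x :=
    ae_eq_of_two_rpow_mul_integral_le hp hμx hξx (fun _ => dist_nonneg) (fun _ => dist_nonneg)
      (by rwa [hfst, hsnd]) (by rwa [hfst])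
  obtain ⟨c, hc⟩ :=
    exists_ae_eq_const_of_ae_prod (f := fun y => dist y x) (g := fun y => dist y x) heq
  exact ⟨x, eq_dirac_of_ae_dist_eq hx hc⟩

end DoublingCenter

section Isometry

variable {p : ℝ}

theorem exists_isIsom_dirac {E : Type*} [NormedAddCommGroup E] [NormedSpace ℝ E]
    [SecondCountableTopology E] [MeasurableSpace E] [BorelSpace E] {Φ : Measure E → Measure E}
    (hp : 1 < p) (hΦ : IsWIsometry E p Φ) :
    ∃ T : E → E, IsIsom T ∧ ∀ x, Φ (Measure.dirac (T x)) = Measure.dirac x := by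
  have hp₀ : 0 < p := one_pos.trans hp
  have hmem : ∀ x : E, Measure.dirac x ∈ WSet E p := dirac_mem_WSet hp₀
  have hpre : ∀ x : E, ∃ y : E, Φ (.dirac y) = .dirac x := fun x => by
    obtain ⟨μ, hμ, hΦμ⟩ := hΦ.1.surjOn (hmem x)
    have hcenter : IsDoublingCenter p (Φ μ) := hΦμ ▸ isDoublingCenter_dirac hp₀ x
    obtain ⟨y, rfl⟩ :=
      exists_eq_dirac_of_isDoublingCenter hp hμ ((isDoublingCenter_map_iff hΦ hμ).1 hcenter)
    exact ⟨y, hΦμ⟩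
  choose T hT using hpre
  have hdist : ∀ x y, dist (T x) (T y) = dist x y := fun x y => by
    rw [← Wdist_dirac_dirac hp₀, ← hΦ.2 _ (hmem _) _ (hmem _), hT, hT, Wdist_dirac_dirac hp₀]
  refine ⟨T, ⟨⟨(Isometry.of_dist_eq hdist).injective, fun y => ?_⟩, hdist⟩, hT⟩
  have hcenter : IsDoublingCenter p (Φ (.dirac y)) :=
    (isDoublingCenter_map_iff hΦ (hmem y)).2 (isDoublingCenter_dirac hp₀ y)
  obtain ⟨x, hx⟩ := exists_eq_dirac_of_isDoublingCenter hp (hΦ.1.mapsTo (hmem y)) hcenter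
  exact ⟨x, dirac_eq_dirac_iff.1 (hΦ.1.injOn (hmem _) (hmem _) ((hT x).trans hx.symm))⟩

theorem potential_map_eq {X : Type*} [MetricSpace X] [MeasurableSpace X] [BorelSpace X]
    {Φ : Measure X → Measure X} (hp : 0 < p) (hΦ : IsWIsometry X p Φ) {T : X → X} (hT : Isometry T)
    (hΦT : ∀ x, Φ (Measure.dirac (T x)) = Measure.dirac x) {μ : Measure X} (hμ : μ ∈ WSet X p)
    (x : X) : potential p (Φ (μ.map T)) x = potential p μ x := by
  have hμT : μ.map T ∈ WSet X p := map_mem_WSet hp.le hT.lipschitz hμ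
  have := hμT.1
  have := (hΦ.1.mapsTo hμT).1
  calc potential p (Φ (μ.map T)) x
      = Wdist p (Φ (μ.map T)) (Φ (.dirac (T x))) ^ p := by
        rw [hΦT, Wdist_dirac_right_rpow hp]
    _ = potential p (μ.map T) (T x) := by
        rw [hΦ.2 _ hμT _ (dirac_mem_WSet hp _), Wdist_dirac_right_rpow hp]
    _ = potential p μ x := by
        rw [potential, integral_map hT.continuous.aemeasurable
          (by fun_prop (disch := exact hp.le)), potential]
        simp_rw [hT.dist_eq]

end Isometry

section Horofunction

variable {ι X : Type*} {l : Filter ι} [PseudoMetricSpace X] {x : ι → X} {o : X} {b : X → ℝ}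

/-- `b` is the horofunction, normalised by `b o = 0`, of a family of points `x i` that escapes
to infinity along `l`: the limit of `y ↦ d(y, x i) - d(o, x i)`. -/
structure IsHorofunction (l : Filter ι) (x : ι → X) (o : X) (b : X → ℝ) : Prop where
  tendsto_dist_atTop : Tendsto (fun i => dist o (x i)) l atTop
  tendsto_dist_sub : ∀ y, Tendsto (fun i => dist y (x i) - dist o (x i)) l (𝓝 (b y))

namespace IsHorofunction

theorem tendsto_dist_mul_rpow_sub_one (h : IsHorofunction l x o b) (p : ℝ) (y : X) :
    Tendsto (fun i => dist o (x i) * ((dist y (x i) / dist o (x i)) ^ p - 1)) l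
      (𝓝 (p * b y)) := by
  have hderiv : HasFDerivWithinAt (fun t : ℝ => t ^ p) _ univ 1 :=
    (Real.hasDerivAt_rpow_const (Or.inl one_ne_zero)).hasFDerivAt.hasFDerivWithinAt
  have hne : ∀ᶠ i in l, dist o (x i) ≠ 0 := h.tendsto_dist_atTop.eventually_ne_atTop 0
  have hlim := hderiv.lim (c := fun i => dist o (x i))
    ((h.tendsto_dist_sub y).div_atTop h.tendsto_dist_atTop) (.of_forall fun _ => mem_univ _)
    ((h.tendsto_dist_sub y).congr' <| hne.mono fun i hi => (mul_div_cancel₀ _ hi).symm)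
  convert hlim.congr' (hne.mono fun i hi => ?_) using 2
  · simp [mul_comm]
  · rw [sub_div, div_self hi, add_sub_cancel, Real.one_rpow, smul_eq_mul]

variable [MeasurableSpace X] [OpensMeasurableSpace X] [l.IsCountablyGenerated] {p : ℝ}
  {μ ν : Measure X}

theorem tendsto_potential (h : IsHorofunction l x o b) (hp : 1 ≤ p) (hμ : μ ∈ WSet X p) :
    Tendsto (fun i => dist o (x i) * (potential p μ (x i) / dist o (x i) ^ p - 1)) l
      (𝓝 (p * ∫ y, b y ∂μ)) := by
  have hp₀ : 0 < p := one_pos.trans_le hp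
  have := hμ.1
  have hdom : Integrable (fun y => (1 + dist y o) ^ p) μ :=
    integrable_rpow_of_nonneg (f := fun y => 1 + dist y o) hp₀
      ((memLp_const (1 : ℝ)).add (memLp_dist hp₀ hμ o)) fun _ => add_nonneg zero_le_one dist_nonneg
  simp_rw [mul_potential_div_rpow_sub_one hp₀ hμ dist_nonneg]
  rw [← integral_const_mul]
  refine tendsto_integral_filter_of_dominated_convergence
    (fun y => p * (1 + dist y o) ^ p) (.of_forall fun i => ?_) ?_ ?_
    (.of_forall (h.tendsto_dist_mul_rpow_sub_one p))
  · exact (by fun_prop (disch := exact hp₀.le) : Continuous _).aestronglyMeasurable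
  · filter_upwards [h.tendsto_dist_atTop.eventually_ge_atTop 1] with i hi
    exact .of_forall fun y =>
      abs_mul_div_rpow_sub_one_le hp dist_nonneg hi (abs_dist_sub_le y o (x i))
  · exact hdom.const_mul p

theorem integral_eq_of_potential_eq [l.NeBot] (h : IsHorofunction l x o b) (hp : 1 ≤ p)
    (hμ : μ ∈ WSet X p) (hν : ν ∈ WSet X p) (hpot : ∀ z, potential p μ z = potential p ν z) :
    ∫ y, b y ∂μ = ∫ y, b y ∂ν := by
  have hlim := h.tendsto_potential hp hμ
  simp_rw [hpot] at hlim
  exact mul_left_cancel₀ (by positivity) (tendsto_nhds_unique hlim (h.tendsto_potential hp hν))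

end IsHorofunction

end Horofunction

section RightDerivative

variable {Ω : Type*} [MeasurableSpace Ω] {P : Measure Ω} [IsFiniteMeasure P] {f g : Ω → ℝ}

theorem hasDerivWithinAt_max_sub (s t c : ℝ) :
    HasDerivWithinAt (fun c => max (c - s) t) ((Iic c).indicator 1 (s + t)) (Ioi c) c := by
  by_cases hc : s + t ≤ c
  · rw [indicator_of_mem (mem_Iic.2 hc), Pi.one_apply]
    refine ((hasDerivAt_id c).sub_const s).hasDerivWithinAt.congr (fun c' hc' => ?_) ?_
    · exact max_eq_left (by linarith [mem_Ioi.1 hc'])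
    · exact max_eq_left (by linarith)
  · rw [indicator_of_notMem (by simpa using hc)]
    refine ((hasDerivAt_const c t).congr_of_eventuallyEq ?_).hasDerivWithinAt
    filter_upwards [eventually_lt_nhds (not_le.1 hc)] with c' hc'
    exact max_eq_right (by linarith)

theorem hasDerivWithinAt_integral_max_sub (hf : Integrable f P) (hg : Integrable g P) (c : ℝ) :
    HasDerivWithinAt (fun c => ∫ ω, max (c - f ω) (g ω) ∂P)
      ((P.map fun ω => f ω + g ω).real (Iic c)) (Ioi c) c := by
  have hint : ∀ c, Integrable (fun ω => max (c - f ω) (g ω)) P := fun c =>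
    ((integrable_const c).sub hf).sup hg
  have hsum : AEMeasurable (fun ω => f ω + g ω) P := hf.aemeasurable.add hg.aemeasurable
  have hcdf : (P.map fun ω => f ω + g ω).real (Iic c) =
      ∫ ω, (Iic c).indicator (1 : ℝ → ℝ) (f ω + g ω) ∂P := by
    rw [← integral_indicator_one measurableSet_Iic, integral_map hsum]
    exact (stronglyMeasurable_one.indicator measurableSet_Iic).aestronglyMeasurable
  have hslope : ∀ c', slope (fun c => ∫ ω, max (c - f ω) (g ω) ∂P) c c' =
      ∫ ω, slope (fun c => max (c - f ω) (g ω)) c c' ∂P := fun c' => by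
    simp_rw [slope_def_field]
    rw [integral_div, integral_sub (hint c') (hint c)]
  rw [hasDerivWithinAt_iff_tendsto_slope' self_notMem_Ioi, hcdf]
  refine Tendsto.congr (fun c' => (hslope c').symm) ?_
  refine tendsto_integral_filter_of_dominated_convergence 1 (.of_forall fun c' => ?_)
    (.of_forall fun c' => .of_forall fun ω => ?_) (integrable_const 1)
    (.of_forall fun ω =>
      (hasDerivWithinAt_iff_tendsto_slope' self_notMem_Ioi).1
        (hasDerivWithinAt_max_sub (f ω) (g ω) c))
  · simp_rw [slope_def_field]
    exact (((hint c').sub (hint c)).div_const _).aestronglyMeasurable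
  · rw [slope_def_field, norm_div]
    refine div_le_one_of_le₀ ((abs_max_sub_max_le_abs _ _ _).trans_eq ?_) (norm_nonneg _)
    rw [sub_sub_sub_cancel_right]
    rfl

theorem map_add_eq_of_integral_max_sub_eq {Ω' : Type*} [MeasurableSpace Ω'] {P' : Measure Ω'}
    [IsFiniteMeasure P'] {f' g' : Ω' → ℝ} (hf : Integrable f P) (hg : Integrable g P)
    (hf' : Integrable f' P') (hg' : Integrable g' P')
    (h : ∀ c, ∫ ω, max (c - f ω) (g ω) ∂P = ∫ ω, max (c - f' ω) (g' ω) ∂P') :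
    (P.map fun ω => f ω + g ω) = P'.map fun ω => f' ω + g' ω := by
  refine Measure.ext_of_Iic _ _ fun c => ?_
  have hderiv := hasDerivWithinAt_integral_max_sub hf hg c
  simp_rw [h] at hderiv
  exact (measureReal_eq_measureReal_iff).1 <|
    (uniqueDiffWithinAt_Ioi c).eq_deriv _ hderiv (hasDerivWithinAt_integral_max_sub hf' hg' c)

end RightDerivative

section Concentration

theorem ae_mem_of_msupport_subset {X : Type*} [TopologicalSpace X] [HereditarilyLindelofSpace X]
    [MeasurableSpace X] {μ : Measure X} {s : Set X} (hs : msupport μ ⊆ s) : ∀ᵐ y ∂μ, y ∈ s := by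
  filter_upwards [Measure.support_mem_ae (μ := μ)] with y hy
  rw [Measure.mem_support_iff_forall] at hy
  exact hs fun U hU hyU => (hy U (hU.mem_nhds hyU)).ne'

theorem eq_of_map_eq_of_ae_leftInverse {X Y : Type*} [MeasurableSpace X] [MeasurableSpace Y]
    {μ ν : Measure X} {g : X → Y} {J : Y → X} (hg : Measurable g) (hJ : Measurable J)
    (hμ : ∀ᵐ x ∂μ, J (g x) = x) (hν : ∀ᵐ x ∂ν, J (g x) = x) (h : μ.map g = ν.map g) :
    μ = ν := by
  have key : ∀ {P : Measure X}, (∀ᵐ x ∂P, J (g x) = x) → (P.map g).map J = P := fun hP => by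
    rw [Measure.map_map hJ hg, Measure.map_congr (f := J ∘ g) (g := id) hP, Measure.map_id]
  rw [← key hμ, h, key hν]

end Concentration

section Plane

variable {p : ℝ} {μ ν : Measure (ℝ × ℝ)} {e : ℝ}

theorem isHorofunction_plane (he : |e| = 1) (c : ℝ) :
    IsHorofunction atTop (fun r : ℝ => (c + r, e * r)) (c, 0)
      fun y => max (c - y.1) (-(e * y.2)) := by
  have hee : e * e = 1 := mul_self_eq_one_iff.2 ((abs_eq zero_le_one).1 he)
  have hnorm : ∀ r : ℝ, 0 ≤ r → dist ((c, 0) : ℝ × ℝ) (c + r, e * r) = r := fun r hr => by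
    simp [Prod.dist_eq, Real.dist_eq, abs_mul, he, abs_of_nonneg hr]
  refine ⟨tendsto_id.congr' ?_, fun y => tendsto_const_nhds.congr' ?_⟩
  · filter_upwards [eventually_ge_atTop 0] with r hr
    exact (hnorm r hr).symm
  · filter_upwards [eventually_ge_atTop 0, eventually_ge_atTop (y.1 - c),
      eventually_ge_atTop (e * y.2)] with r hr hr₁ hr₂
    have hfst : |y.1 - (c + r)| = c - y.1 + r := by
      rw [abs_of_nonpos (by linarith)]
      ring
    have hsnd : |y.2 - e * r| = -(e * y.2) + r := by
      calc |y.2 - e * r| = |e| * |y.2 - e * r| := by rw [he, one_mul]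
        _ = |e * y.2 - e * e * r| := by rw [← abs_mul, mul_sub, mul_assoc]
        _ = -(e * y.2) + r := by
          rw [hee, one_mul, abs_of_nonpos (by linarith)]
          ring
    rw [hnorm r hr, Prod.dist_eq, Real.dist_eq, Real.dist_eq, hfst, hsnd, max_add_add_right,
      add_sub_cancel_right]

theorem map_sub_mul_eq_of_potential_eq (hp : 1 ≤ p) (hμ : μ ∈ WSet (ℝ × ℝ) p)
    (hν : ν ∈ WSet (ℝ × ℝ) p) (hpot : ∀ x, potential p μ x = potential p ν x) (he : |e| = 1) :
    (μ.map fun y => y.1 - e * y.2) = ν.map fun y => y.1 - e * y.2 := by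
  have := hμ.1
  have := hν.1
  have hμi := integrable_of_mem_WSet hp hμ
  have hνi := integrable_of_mem_WSet hp hν
  simp_rw [sub_eq_add_neg]
  exact map_add_eq_of_integral_max_sub_eq hμi.fst (hμi.snd.const_mul e).neg hνi.fst
    (hνi.snd.const_mul e).neg fun c =>
      (isHorofunction_plane he c).integral_eq_of_potential_eq hp hμ hν hpot

theorem Lplus_eq_diagLine : Lplus = diagLine 1 0 := by
  simp [Lplus, diagLine]

theorem Lminus_eq_diagLine : Lminus = diagLine (-1) 0 := by
  simp [Lminus, diagLine]

theorem mem_diagLine_iff {a : ℝ} (he : |e| = 1) (y : ℝ × ℝ) :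
    y ∈ diagLine e a ↔ y.1 - e * y.2 = -(e * a) := by
  have hee : e * e = 1 := mul_self_eq_one_iff.2 ((abs_eq zero_le_one).1 he)
  rw [diagLine, mem_ofPred_eq]
  constructor <;> intro h
  · linear_combination (-e) * h - y.1 * hee
  · linear_combination (-e) * h - (y.2 - a) * hee

theorem eq_of_potential_eq_of_ae_mem_diagLine (hp : 1 ≤ p) (hμ : μ ∈ WSet (ℝ × ℝ) p)
    (hν : ν ∈ WSet (ℝ × ℝ) p) (hpot : ∀ x, potential p μ x = potential p ν x) {a : ℝ}
    (he : |e| = 1) (hμe : ∀ᵐ y ∂μ, y ∈ diagLine e a) : μ = ν := by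
  -- On the line `y.1 - e * y.2` is constant, which locates `ν`, and `y.1 + e * y.2` is a
  -- coordinate.
  have hνe : ∀ᵐ y ∂ν, y ∈ diagLine e a := by
    have hmeas : Measurable fun y : ℝ × ℝ => y.1 - e * y.2 := by fun_prop
    simp_rw [mem_diagLine_iff he] at hμe ⊢
    have hmap := (ae_map_iff hmeas.aemeasurable (measurableSet_singleton (-(e * a)))).2 hμe
    rw [map_sub_mul_eq_of_potential_eq hp hμ hν hpot he] at hmap
    exact (ae_map_iff hmeas.aemeasurable (measurableSet_singleton _)).1 hmap
  let J : ℝ → ℝ × ℝ := fun s => ((s - e * a) / 2, e * ((s - e * a) / 2) + a)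
  have hJ : ∀ y ∈ diagLine e a, J (y.1 - -e * y.2) = y := fun y hy => by
    have hee : e * e = 1 := mul_self_eq_one_iff.2 ((abs_eq zero_le_one).1 he)
    have hfst : (y.1 - -e * y.2 - e * a) / 2 = y.1 := by
      linear_combination e / 2 * mem_ofPred.1 hy + y.1 / 2 * hee
    exact Prod.ext hfst (by simp only [J, hfst]; exact hy.symm)
  exact eq_of_map_eq_of_ae_leftInverse (J := J) (by fun_prop) (by fun_prop)
    (hμe.mono hJ) (hνe.mono hJ)
    (map_sub_mul_eq_of_potential_eq hp hμ hν hpot (by rwa [abs_neg]))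

end Plane

end Wasserstein

open Wasserstein

theorem Wp_R2_diagonally_rigid_general {p : ℝ} (hp : 1 < p)
    {Φ : Measure (ℝ × ℝ) → Measure (ℝ × ℝ)} (hΦ : IsWIsometry (ℝ × ℝ) p Φ) :
    ∃ T : ℝ × ℝ → ℝ × ℝ, IsIsom T ∧ ∀ μ ∈ WSet (ℝ × ℝ) p, ∀ ε a : ℝ, |ε| = 1 →
      msupport μ ⊆ diagLine ε a → Φ (μ.map T) = μ := by
  have hp₀ : 0 < p := one_pos.trans hp
  obtain ⟨T, hT, hΦT⟩ := exists_isIsom_dirac hp hΦ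
  have hiso : Isometry T := Isometry.of_dist_eq hT.2
  refine ⟨T, hT, fun μ hμ ε a hε hsupp => ?_⟩
  have hν : Φ (μ.map T) ∈ WSet (ℝ × ℝ) p :=
    hΦ.1.mapsTo (map_mem_WSet hp₀.le hiso.lipschitz hμ)
  exact (eq_of_potential_eq_of_ae_mem_diagLine hp.le hμ hν
    (fun x => (potential_map_eq hp₀ hΦ hiso hΦT hμ x).symm) hε
    (ae_mem_of_msupport_subset hsupp)).symm

/-- Diagonal rigidity of `𝒲_p(ℝ², d_m)` for all `p > 1`: every isometry, composed with
the push-forward of a suitable isometry of the base, fixes all measures supported on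
`L₊` or `L₋`. -/
theorem Wp_R2_diagonally_rigid (p : ℝ) (hp : 1 < p)
    (Φ : Measure (ℝ × ℝ) → Measure (ℝ × ℝ)) (hΦ : IsWIsometry (ℝ × ℝ) p Φ) :
    ∃ T : ℝ × ℝ → ℝ × ℝ, IsIsom T ∧ ∀ μ ∈ WSet (ℝ × ℝ) p,
      (msupport μ ⊆ Lplus ∨ msupport μ ⊆ Lminus) → Φ (μ.map T) = μ := by
  obtain ⟨T, hT, hfix⟩ := Wp_R2_diagonally_rigid_general hp hΦ
  exact ⟨T, hT, fun μ hμ h => h.elim (hfix μ hμ 1 0 (by simp) <| Lplus_eq_diagLine ▸ ·)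
    (hfix μ hμ (-1) 0 (by simp) <| Lminus_eq_diagLine ▸ ·)⟩
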